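/- Let U ⊆ ℂ² be open, F : U → ℂ holomorphic, ω = (P,Q) a holomorphic 1-form on U, and let (g_i, r_i), 1 ≤ i ≤ k, be a Françoise sequence of order k for dF + εω (with g₀ = 1). Define on U × ℂ (coordinates x,y,ε): G = Σ_{i=0}^{k} (−1)^i ε^i g_i, A = G·(∂F/∂x + εP), B = G·(∂F/∂y + εQ), C = Σ_{i=1}^{k} (−1)^{i+1} i ε^{i−1} r_i, and let Ω be the 1-form (A, B, C). Then the integrability coefficient ⟨Ω ∧ dΩ⟩ := A·(∂C/∂y − ∂B/∂ε) + B·(∂A/∂ε − ∂C/∂x) + C·(∂B/∂x − ∂A/∂y), which is a polynomial in ε with holomorphic coefficients on U, has identically vanishing coefficient of ε^n for every n ≤ k − 1. -/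

import Mathlib

/-!
The relations `g_{i-1} ω = g_i dF + dr_i` make `G · (dF + εω)` telescope to
`d_{x,y} S + (-1)^k ε^{k+1} g_k ω` with `S = F + ∑_{i=1}^k (-1)^{i+1} ε^i r_i`, and `C = ∂S/∂ε`.
Hence `Ω = dS + (-1)^k ε^{k+1} g_k ω` is closed up to a term whose differential is divisible by
`ε^k`, and so is `⟨Ω ∧ dΩ⟩`.

Closedness of `dS` needs the holomorphic functions involved to be twice differentiable. The Schwarz
lemma bounds the error of the first order expansion of a holomorphic function quadratically, so
difference quotients converge locally uniformly to the directional derivative; and the Cauchy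
estimates show that a uniform limit of holomorphic functions is holomorphic.
-/

/-- ∂/∂x of a function on ℂ². -/
noncomputable def pdx (f : ℂ × ℂ → ℂ) (p : ℂ × ℂ) : ℂ := fderiv ℂ f p (1, 0)

/-- ∂/∂y of a function on ℂ². -/
noncomputable def pdy (f : ℂ × ℂ → ℂ) (p : ℂ × ℂ) : ℂ := fderiv ℂ f p (0, 1)

/-- The integrability coefficient ⟨Ω ∧ dΩ⟩ of the 1-form Ω = A dx + B dy + C dε on
ℂ² × ℂ (coordinates (x,y,ε)), namely
A·(∂C/∂y − ∂B/∂ε) + B·(∂A/∂ε − ∂C/∂x) + C·(∂B/∂x − ∂A/∂y). -/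
noncomputable def intCoeff (A B C : ℂ × ℂ → ℂ → ℂ) (p : ℂ × ℂ) (ε : ℂ) : ℂ :=
  A p ε * (pdy (fun q => C q ε) p - deriv (fun e => B p e) ε) +
  B p ε * (deriv (fun e => A p e) ε - pdx (fun q => C q ε) p) +
  C p ε * (pdx (fun q => B q ε) p - pdy (fun q => A q ε) p)

open Filter Metric Topology

section Holomorphic

variable {E F : Type*} [NormedAddCommGroup E] [NormedSpace ℂ E]
  [NormedAddCommGroup F] [NormedSpace ℂ F]

theorem norm_fderiv_le_of_norm_le_on_ball {f : E → F} {c : E} {R M : ℝ} (hR : 0 < R)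
    (hf : DifferentiableOn ℂ f (ball c R)) (hM : ∀ x ∈ ball c R, ‖f x‖ ≤ M) :
    ‖fderiv ℂ f c‖ ≤ 2 * M / R := by
  refine Complex.norm_fderiv_le_div_of_mapsTo_ball hf (fun x hx => ?_) hR
  rw [mem_closedBall, dist_eq_norm, two_mul]
  exact norm_sub_le_of_le (hM x hx) (hM c (mem_ball_self hR))

theorem norm_sub_sub_fderiv_le_of_norm_le_on_ball {f : E → F} {c z : E} {R M : ℝ}
    (hf : DifferentiableOn ℂ f (ball c R)) (hM : ∀ x ∈ ball c R, ‖f x‖ ≤ M) (hz : z ∈ ball c R) :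
    ‖f z - f c - fderiv ℂ f c (z - c)‖ ≤ 4 * M * (‖z - c‖ / R) ^ 2 := by
  have hR : 0 < R := pos_of_mem_ball hz
  have hfc : DifferentiableAt ℂ f c := hf.differentiableAt (ball_mem_nhds c hR)
  let ψ : E → F := fun x => f x - f c - fderiv ℂ f c (x - c)
  have hψc : ψ c = 0 := by simp [ψ]
  have hψ : DifferentiableOn ℂ ψ (ball c R) := by fun_prop
  have hmaps : Set.MapsTo ψ (ball c R) (closedBall (ψ c) (4 * M)) := by
    intro x hx
    have hlin : ‖fderiv ℂ f c (x - c)‖ ≤ 2 * M := calc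
      ‖fderiv ℂ f c (x - c)‖ ≤ 2 * M / R * R :=
        (fderiv ℂ f c).le_of_opNorm_le_of_le (norm_fderiv_le_of_norm_le_on_ball hR hf hM)
          (mem_ball_iff_norm.1 hx).le
      _ = 2 * M := div_mul_cancel₀ _ hR.ne'
    rw [hψc, mem_closedBall_zero_iff]
    calc ‖ψ x‖ ≤ M + M + 2 * M :=
          norm_sub_le_of_le (norm_sub_le_of_le (hM x hx) (hM c (mem_ball_self hR))) hlin
      _ = 4 * M := by ring
  have hlittle : (ψ · - ψ c) =o[𝓝 c] fun x => ‖x - c‖ ^ 1 := by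
    simpa only [hψc, sub_zero, pow_one] using hfc.hasFDerivAt.isLittleO.norm_right
  simpa [hψc, ψ, dist_eq_norm] using
    Complex.dist_le_mul_div_pow_of_mapsTo_ball_of_isLittleO hψ hmaps hlittle hz

theorem uniformCauchySeqOn_fderiv_ball {ι : Type*} {l : Filter ι} {f : ι → E → F} {c : E} {r R : ℝ}
    (hrR : r < R) (hd : ∀ᶠ n in l, DifferentiableOn ℂ (f n) (ball c R))
    (hf : UniformCauchySeqOn f l (ball c R)) :
    UniformCauchySeqOn (fun n => fderiv ℂ (f n)) l (ball c r) := by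
  have hδ : 0 < R - r := sub_pos.2 hrR
  intro s hs
  obtain ⟨ε, hε, hεs⟩ := Metric.mem_uniformity_dist.1 hs
  filter_upwards [hf _ (Metric.dist_mem_uniformity (show 0 < ε * (R - r) / 4 by positivity)),
    hd.prod_mk hd] with ⟨m, n⟩ hmn ⟨hm, hn⟩ x hx
  have hsub : ball x (R - r) ⊆ ball c R :=
    ball_subset_ball' (by linarith [mem_ball.1 hx])
  have hdiff : ∀ {i}, DifferentiableOn ℂ (f i) (ball c R) → DifferentiableAt ℂ (f i) x := fun h =>
    (h.mono hsub).differentiableAt (ball_mem_nhds x hδ)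
  have hle : ‖fderiv ℂ (f m - f n) x‖ ≤ 2 * (ε * (R - r) / 4) / (R - r) :=
    norm_fderiv_le_of_norm_le_on_ball hδ ((hm.sub hn).mono hsub) fun y hy => by
      simpa [dist_eq_norm] using (hmn y (hsub hy)).le
  apply hεs
  rw [dist_eq_norm, ← fderiv_sub (hdiff hm) (hdiff hn)]
  calc ‖fderiv ℂ (f m - f n) x‖ ≤ 2 * (ε * (R - r) / 4) / (R - r) := hle
    _ = ε / 2 := by field_simp; norm_num
    _ < ε := half_lt_self hε

theorem tendstoUniformlyOn_inv_smul_sub_ball {f : E → F} {c : E} {r R M : ℝ} (hrR : r < R)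
    (hf : DifferentiableOn ℂ f (ball c R)) (hM : ∀ x ∈ ball c R, ‖f x‖ ≤ M) (v : E) :
    TendstoUniformlyOn (fun (t : ℂ) x => t⁻¹ • (f (x + t • v) - f x)) (fun x => fderiv ℂ f x v)
      (𝓝[≠] 0) (ball c r) := by
  have hδ : 0 < R - r := sub_pos.2 hrR
  have hsmall : ∀ K η : ℝ, 0 < η → ∀ᶠ t : ℂ in 𝓝[≠] 0, ‖t‖ * K < η := fun K η hη =>
    nhdsWithin_le_nhds ((Continuous.tendsto' (by fun_prop) 0 0 (by simp)).eventually_lt_const hη)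
  refine Metric.tendstoUniformlyOn_iff.2 fun ε hε => ?_
  filter_upwards [hsmall ‖v‖ _ hδ, hsmall (4 * M * (‖v‖ / (R - r)) ^ 2) _ hε, self_mem_nhdsWithin]
    with t htv htε (ht : t ≠ 0) x hx
  have hsub : ball x (R - r) ⊆ ball c R :=
    ball_subset_ball' (by linarith [mem_ball.1 hx])
  have htaylor : ‖f (x + t • v) - f x - fderiv ℂ f x (t • v)‖
      ≤ 4 * M * (‖t • v‖ / (R - r)) ^ 2 := by
    simpa using norm_sub_sub_fderiv_le_of_norm_le_on_ball (z := x + t • v) (hf.mono hsub)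
      (fun y hy => hM y (hsub hy)) (by simpa [norm_smul] using htv)
  have hquot : t⁻¹ • (f (x + t • v) - f x) - fderiv ℂ f x v
      = t⁻¹ • (f (x + t • v) - f x - fderiv ℂ f x (t • v)) := by
    rw [smul_sub _ _ (fderiv ℂ f x (t • v)), map_smul, inv_smul_smul₀ ht]
  have ht' : ‖t‖ ≠ 0 := norm_ne_zero_iff.2 ht
  rw [dist_comm, dist_eq_norm, hquot, norm_smul, norm_inv]
  calc ‖t‖⁻¹ * ‖f (x + t • v) - f x - fderiv ℂ f x (t • v)‖
      ≤ ‖t‖⁻¹ * (4 * M * (‖t • v‖ / (R - r)) ^ 2) := by gcongr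
    _ = ‖t‖ * (4 * M * (‖v‖ / (R - r)) ^ 2) := by rw [norm_smul]; field_simp
    _ < ε := htε

variable [CompleteSpace F]

theorem differentiableAt_of_tendstoUniformlyOn_ball {ι : Type*} {l : Filter ι} [l.NeBot]
    {f : ι → E → F} {g : E → F} {c : E} {R : ℝ} (hR : 0 < R)
    (hd : ∀ᶠ n in l, DifferentiableOn ℂ (f n) (ball c R))
    (hfg : TendstoUniformlyOn f g l (ball c R)) : DifferentiableAt ℂ g c := by
  have hcauchy : UniformCauchySeqOn (fun n => fderiv ℂ (f n)) l (ball c (R / 2)) :=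
    uniformCauchySeqOn_fderiv_ball (half_lt_self hR) hd hfg.uniformCauchySeqOn
  have hlim : ∀ x ∈ ball c (R / 2), ∃ L, Tendsto (fun n => fderiv ℂ (f n) x) l (𝓝 L) :=
    fun x hx => cauchy_map_iff_exists_tendsto.1 (hcauchy.cauchy_map hx)
  choose! g' hg' using hlim
  have hunif : TendstoUniformlyOnFilter (fun n => fderiv ℂ (f n)) g' l (𝓝 c) :=
    (hcauchy.tendstoUniformlyOn_of_tendsto hg').tendstoUniformlyOnFilter.mono_right
      (le_principal_iff.2 (ball_mem_nhds c (half_pos hR)))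
  refine (hasFDerivAt_of_tendstoUniformlyOnFilter (f := f) hunif ?_ ?_).differentiableAt
  · filter_upwards [hd.prod_mk (isOpen_ball.eventually_mem (mem_ball_self hR))] with n ⟨hn, hx⟩
    exact (hn.differentiableAt (isOpen_ball.mem_nhds hx)).hasFDerivAt
  · filter_upwards [ball_mem_nhds c hR] with x hx using hfg.tendsto_at hx

theorem differentiableOn_fderiv_apply {U : Set E} (hU : IsOpen U) {f : E → F}
    (hf : DifferentiableOn ℂ f U) (v : E) : DifferentiableOn ℂ (fun x => fderiv ℂ f x v) U := by
  intro p hp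
  have hbdd : ∀ᶠ x in 𝓝 p, ‖f x‖ < ‖f p‖ + 1 :=
    (hf.continuousOn.continuousAt (hU.mem_nhds hp)).norm.eventually_lt_const (lt_add_one _)
  obtain ⟨R, hR, hball⟩ := Metric.mem_nhds_iff.1 (inter_mem (hU.mem_nhds hp) hbdd)
  have hfball : DifferentiableOn ℂ f (ball p R) := hf.mono fun x hx => (hball hx).1
  refine (differentiableAt_of_tendstoUniformlyOn_ball (half_pos hR) ?_
    (tendstoUniformlyOn_inv_smul_sub_ball (half_lt_self hR) hfball
      (fun x hx => (hball hx).2.le) v)).differentiableWithinAt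
  have htv : ∀ᶠ t : ℂ in 𝓝[≠] 0, ‖t • v‖ < R / 2 := nhdsWithin_le_nhds
    ((Continuous.tendsto' (by fun_prop) 0 0 (by simp)).eventually_lt_const (half_pos hR))
  filter_upwards [htv] with t ht
  have hshift : Set.MapsTo (fun x => x + t • v) (ball p (R / 2)) (ball p R) := by
    intro x hx
    rw [mem_ball_iff_norm, add_sub_right_comm, ← add_halves R]
    exact (norm_add_le _ _).trans_lt (add_lt_add (mem_ball_iff_norm.1 hx) ht)
  exact ((hfball.comp (by fun_prop) hshift).sub
    (hfball.mono (ball_subset_ball (half_le_self hR.le)))).const_smul t⁻¹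

theorem contDiffOn_of_differentiableOn_complex [FiniteDimensional ℂ E] {U : Set E} (hU : IsOpen U)
    {f : E → F} (hf : DifferentiableOn ℂ f U) (n : ℕ) : ContDiffOn ℂ n f U := by
  induction n generalizing f with
  | zero => exact contDiffOn_zero.2 hf.continuousOn
  | succ n ih =>
    refine contDiffOn_succ_of_fderiv_apply (n := n) hf (by simp) fun v => ?_
    exact (ih (differentiableOn_fderiv_apply hU hf v)).congr fun x hx => by
      rw [fderivWithin_of_isOpen hU hx]

end Holomorphic

theorem fderiv_fderiv_apply_comm {𝕜 E F : Type*} [RCLike 𝕜] [NormedAddCommGroup E]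
    [NormedSpace 𝕜 E] [NormedAddCommGroup F] [NormedSpace 𝕜 F] {f : E → F} {x : E}
    (hf : ContDiffAt 𝕜 2 f x) (v w : E) :
    fderiv 𝕜 (fun y => fderiv 𝕜 f y v) x w = fderiv 𝕜 (fun y => fderiv 𝕜 f y w) x v := by
  have hf' : DifferentiableAt 𝕜 (fderiv 𝕜 f) x :=
    (hf.fderiv_right (m := 1) (by norm_num)).differentiableAt one_ne_zero
  have happly : ∀ a b, fderiv 𝕜 (fun y => fderiv 𝕜 f y a) x b = fderiv 𝕜 (fderiv 𝕜 f) x b a :=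
    fun a b => by simp [fderiv_clm_apply hf' (differentiableAt_const a)]
  rw [happly, happly]
  exact hf.isSymmSndFDerivAt (by simp) w v

theorem iteratedDeriv_eq_zero_of_eventually_eq_pow_smul {𝕜 E : Type*} [NontriviallyNormedField 𝕜]
    [CharZero 𝕜] [NormedAddCommGroup E] [NormedSpace 𝕜 E] [CompleteSpace E]
    {f h : 𝕜 → E} {z₀ : 𝕜} {n k : ℕ} (hn : n < k) (hh : AnalyticAt 𝕜 h z₀)
    (hf : ∀ᶠ z in 𝓝 z₀, f z = (z - z₀) ^ k • h z) : iteratedDeriv n f z₀ = 0 := by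
  have hfan : AnalyticAt 𝕜 f z₀ := AnalyticAt.congr (by fun_prop) (EventuallyEq.symm hf)
  exact (natCast_le_analyticOrderAt_iff_iteratedDeriv_eq_zero hfan).1
    ((natCast_le_analyticOrderAt hfan).2 ⟨h, hh, hf⟩) n hn

section Integrability

variable {U : Set (ℂ × ℂ)} {p : ℂ × ℂ}

theorem pdx_pdy_comm (hU : IsOpen U) {f : ℂ × ℂ → ℂ} (hf : DifferentiableOn ℂ f U) (hp : p ∈ U) :
    pdx (pdy f) p = pdy (pdx f) p :=
  fderiv_fderiv_apply_comm
    ((contDiffOn_of_differentiableOn_complex hU hf 2).contDiffAt (hU.mem_nhds hp)) (0, 1) (1, 0)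

theorem pdx_sub_pdy_of_eq_exact_add (hU : IsOpen U) (hp : p ∈ U) {S A B u v : ℂ × ℂ → ℂ} {t : ℂ}
    (hS : DifferentiableOn ℂ S U) (hu : DifferentiableAt ℂ u p) (hv : DifferentiableAt ℂ v p)
    (hA : ∀ q ∈ U, A q = pdx S q + t * u q) (hB : ∀ q ∈ U, B q = pdy S q + t * v q) :
    pdx B p - pdy A p = t * (pdx v p - pdy u p) := by
  have hderiv : ∀ {A u : ℂ × ℂ → ℂ} (w : ℂ × ℂ), DifferentiableAt ℂ u p →
      (∀ q ∈ U, A q = fderiv ℂ S q w + t * u q) →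
      fderiv ℂ A p = fderiv ℂ (fun q => fderiv ℂ S q w) p + t • fderiv ℂ u p := by
    intro A u w hu hA
    have hSw : DifferentiableAt ℂ (fun q => fderiv ℂ S q w) p :=
      (differentiableOn_fderiv_apply hU hS w).differentiableAt (hU.mem_nhds hp)
    rw [(eventuallyEq_of_mem (hU.mem_nhds hp) hA).fderiv_eq, fderiv_fun_add hSw (hu.const_mul t),
      fderiv_const_mul hu]
  have hB' : pdx B p = pdx (pdy S) p + t * pdx v p :=
    DFunLike.congr_fun (hderiv (0, 1) hv hB) (1, 0)
  have hA' : pdy A p = pdy (pdx S) p + t * pdy u p :=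
    DFunLike.congr_fun (hderiv (1, 0) hu hA) (0, 1)
  rw [hB', hA', pdx_pdy_comm hU hS hp]
  ring

theorem intCoeff_of_eq_exact_add (hU : IsOpen U) (hp : p ∈ U) {S A B C : ℂ × ℂ → ℂ → ℂ}
    {u v : ℂ × ℂ → ℂ} {t : ℂ → ℂ} {t' ε : ℂ} (hS : DifferentiableOn ℂ (S · ε) U)
    (hu : DifferentiableAt ℂ u p) (hv : DifferentiableAt ℂ v p)
    (hA : ∀ q ∈ U, ∀ e, A q e = pdx (S · e) q + t e * u q)
    (hB : ∀ q ∈ U, ∀ e, B q e = pdy (S · e) q + t e * v q)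
    (hCx : HasDerivAt (fun e => pdx (S · e) p) (pdx (C · ε) p) ε)
    (hCy : HasDerivAt (fun e => pdy (S · e) p) (pdy (C · ε) p) ε) (ht : HasDerivAt t t' ε) :
    intCoeff A B C p ε = t' * (pdy (S · ε) p * u p - pdx (S · ε) p * v p)
      + t ε * (C p ε * (pdx v p - pdy u p)) := by
  have hAε : deriv (A p ·) ε = pdx (C · ε) p + t' * u p := by
    rw [funext (hA p hp), (hCx.fun_add (ht.mul_const _)).deriv]
  have hBε : deriv (B p ·) ε = pdy (C · ε) p + t' * v p := by
    rw [funext (hB p hp), (hCy.fun_add (ht.mul_const _)).deriv]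
  have hcurl : pdx (B · ε) p - pdy (A · ε) p = t ε * (pdx v p - pdy u p) :=
    pdx_sub_pdy_of_eq_exact_add hU hp hS hu hv (hA · · ε) (hB · · ε)
  rw [intCoeff, hAε, hBε, hcurl, hA p hp, hB p hp]
  ring

theorem iteratedDeriv_intCoeff_eq_zero_of_eq_exact_add (hU : IsOpen U) (hp : p ∈ U)
    {S A B C : ℂ × ℂ → ℂ → ℂ} {u v : ℂ × ℂ → ℂ} {c : ℂ} {n k : ℕ}
    (hS : ∀ ε, DifferentiableOn ℂ (S · ε) U) (hu : DifferentiableAt ℂ u p)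
    (hv : DifferentiableAt ℂ v p)
    (hA : ∀ q ∈ U, ∀ e, A q e = pdx (S · e) q + c * e ^ (k + 1) * u q)
    (hB : ∀ q ∈ U, ∀ e, B q e = pdy (S · e) q + c * e ^ (k + 1) * v q)
    (hCx : ∀ ε, HasDerivAt (fun e => pdx (S · e) p) (pdx (C · ε) p) ε)
    (hCy : ∀ ε, HasDerivAt (fun e => pdy (S · e) p) (pdy (C · ε) p) ε)
    (hC : AnalyticAt ℂ (C p) 0) (hn : n < k) :
    iteratedDeriv n (fun ε => intCoeff A B C p ε) 0 = 0 := by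
  have hSx : AnalyticAt ℂ (fun e => pdx (S · e) p) 0 :=
    Differentiable.analyticAt (fun ε => (hCx ε).differentiableAt) 0
  have hSy : AnalyticAt ℂ (fun e => pdy (S · e) p) 0 :=
    Differentiable.analyticAt (fun ε => (hCy ε).differentiableAt) 0
  refine iteratedDeriv_eq_zero_of_eventually_eq_pow_smul
    (h := fun e => c * ((k + 1) * (pdy (S · e) p * u p - pdx (S · e) p * v p)
      + e * (C p e * (pdx v p - pdy u p)))) hn (by fun_prop) (.of_forall fun ε => ?_)
  rw [intCoeff_of_eq_exact_add hU hp (hS ε) hu hv hA hB (hCx ε) (hCy ε)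
    ((hasDerivAt_pow (k + 1) ε).const_mul c)]
  simp only [sub_zero, smul_eq_mul, Nat.cast_succ, Nat.add_sub_cancel]
  ring

end Integrability

theorem sum_neg_one_pow_mul_add_mul_eq {R : Type*} [CommRing R] {k : ℕ} {γ ρ : ℕ → R} {a b : R}
    (e : R) (h0 : γ 0 = 1) (h : ∀ i, 1 ≤ i → i ≤ k → γ (i - 1) * b = γ i * a + ρ i) :
    (∑ i ∈ Finset.range (k + 1), (-1) ^ i * e ^ i * γ i) * (a + e * b) =
      a + ∑ i ∈ Finset.Icc 1 k, (-1) ^ (i + 1) * e ^ i * ρ i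
        + (-1) ^ k * e ^ (k + 1) * (γ k * b) := by
  induction k with
  | zero => simp [h0]
  | succ k ih =>
    have hk : γ k * b = γ (k + 1) * a + ρ (k + 1) := h (k + 1) (by lia) le_rfl
    rw [Finset.sum_range_succ, add_mul, ih fun i h1 h2 => h i h1 (by lia),
      Finset.sum_Icc_succ_top (by lia), hk]
    ring

section Francoise

variable {𝕜 E : Type*} [NontriviallyNormedField 𝕜] [NormedAddCommGroup E] [NormedSpace 𝕜 E]
  {F : E → 𝕜} {r : ℕ → E → 𝕜} {k : ℕ}

/-- The potential `S = F + ∑_{i=1}^k (-1)^{i+1} ε^i r_i` of the closed part of the 1-form built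
from a Françoise sequence of order `k`, as a function of the point and of `ε`. -/
def francoisePotential (F : E → 𝕜) (r : ℕ → E → 𝕜) (k : ℕ) (p : E) (ε : 𝕜) : 𝕜 :=
  F p + ∑ i ∈ Finset.Icc 1 k, (-1) ^ (i + 1) * ε ^ i * r i p

theorem differentiableOn_francoisePotential {U : Set E} (hF : DifferentiableOn 𝕜 F U)
    (hr : ∀ i, 1 ≤ i → i ≤ k → DifferentiableOn 𝕜 (r i) U) (ε : 𝕜) :
    DifferentiableOn 𝕜 (francoisePotential F r k · ε) U :=
  hF.fun_add <| DifferentiableOn.fun_sum fun i hi =>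
    (hr i (Finset.mem_Icc.1 hi).1 (Finset.mem_Icc.1 hi).2).const_mul _

theorem fderiv_sum_const_mul_apply {ι : Type*} {s : Finset ι} {c : ι → 𝕜} {f : ι → E → 𝕜} {p : E}
    (hf : ∀ i ∈ s, DifferentiableAt 𝕜 (f i) p) (v : E) :
    fderiv 𝕜 (fun q => ∑ i ∈ s, c i * f i q) p v = ∑ i ∈ s, c i * fderiv 𝕜 (f i) p v := by
  rw [fderiv_fun_sum fun i hi => (hf i hi).const_mul (c i), sum_apply]
  refine Finset.sum_congr rfl fun i hi => ?_
  rw [fderiv_const_mul (hf i hi), smul_apply, smul_eq_mul]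

variable {p : E}

theorem fderiv_francoisePotential_apply (hF : DifferentiableAt 𝕜 F p)
    (hr : ∀ i ∈ Finset.Icc 1 k, DifferentiableAt 𝕜 (r i) p) (ε : 𝕜) (v : E) :
    fderiv 𝕜 (francoisePotential F r k · ε) p v =
      fderiv 𝕜 F p v + ∑ i ∈ Finset.Icc 1 k, (-1) ^ (i + 1) * ε ^ i * fderiv 𝕜 (r i) p v := by
  unfold francoisePotential
  rw [fderiv_fun_add hF (DifferentiableAt.fun_sum fun i hi => (hr i hi).const_mul _), add_apply,
    fderiv_sum_const_mul_apply hr]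

theorem hasDerivAt_fderiv_francoisePotential_apply (hF : DifferentiableAt 𝕜 F p)
    (hr : ∀ i ∈ Finset.Icc 1 k, DifferentiableAt 𝕜 (r i) p) (ε : 𝕜) (v : E) :
    HasDerivAt (fun e => fderiv 𝕜 (francoisePotential F r k · e) p v)
      (fderiv 𝕜 (fun q => ∑ i ∈ Finset.Icc 1 k, (-1) ^ (i + 1) * (i : 𝕜) * ε ^ (i - 1) * r i q) p v)
      ε := by
  rw [fderiv_sum_const_mul_apply hr]
  simp only [fderiv_francoisePotential_apply hF hr]
  refine (HasDerivAt.fun_sum fun i _ => ?_).const_add _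
  simpa only [mul_assoc] using
    ((hasDerivAt_pow i ε).const_mul ((-1) ^ (i + 1))).mul_const (fderiv 𝕜 (r i) p v)

theorem francoise_mul_deformation_eq {g : ℕ → E → 𝕜} {v : E} {a : 𝕜} (hF : DifferentiableAt 𝕜 F p)
    (hr : ∀ i ∈ Finset.Icc 1 k, DifferentiableAt 𝕜 (r i) p) (hg0 : g 0 p = 1)
    (hgr : ∀ i, 1 ≤ i → i ≤ k → g (i - 1) p * a = g i p * fderiv 𝕜 F p v + fderiv 𝕜 (r i) p v)
    (ε : 𝕜) :
    (∑ i ∈ Finset.range (k + 1), (-1) ^ i * ε ^ i * g i p) * (fderiv 𝕜 F p v + ε * a) =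
      fderiv 𝕜 (francoisePotential F r k · ε) p v + (-1) ^ k * ε ^ (k + 1) * (g k p * a) := by
  rw [fderiv_francoisePotential_apply hF hr]
  exact sum_neg_one_pow_mul_add_mul_eq ε hg0 hgr

end Francoise

/-- Theorem 7(ii): given a Françoise sequence (g_i, r_i) of order k for dF + εω, the
1-form Ω = (A, B, C) on U × ℂ built via G_i = (−1)^i g_i and R_i = (−1)^{i+1} i r_i
satisfies the Godbillon-Vey integrability equation up to order k: the coefficient of
ε^n in ⟨Ω ∧ dΩ⟩ (a polynomial in ε with holomorphic coefficients) vanishes identically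
on U for every n ≤ k − 1. -/
theorem francoise_solves_godbillon_vey
    (U : Set (ℂ × ℂ)) (hU : IsOpen U) (k : ℕ)
    (F P Q : ℂ × ℂ → ℂ) (g r : ℕ → ℂ × ℂ → ℂ)
    (hF : DifferentiableOn ℂ F U)
    (hP : DifferentiableOn ℂ P U) (hQ : DifferentiableOn ℂ Q U)
    (hg0 : ∀ p, g 0 p = 1)
    (hgd : ∀ i ≤ k, DifferentiableOn ℂ (g i) U)
    (hrd : ∀ i, 1 ≤ i → i ≤ k → DifferentiableOn ℂ (r i) U)
    (hFr : ∀ i, 1 ≤ i → i ≤ k → ∀ p ∈ U,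
      g (i - 1) p * P p = g i p * pdx F p + pdx (r i) p ∧
      g (i - 1) p * Q p = g i p * pdy F p + pdy (r i) p) :
    ∀ p ∈ U, ∀ n < k,
      iteratedDeriv n
        (fun ε : ℂ => intCoeff
          (fun q e => (∑ i ∈ Finset.range (k + 1), (-1 : ℂ) ^ i * e ^ i * g i q) *
            (pdx F q + e * P q))
          (fun q e => (∑ i ∈ Finset.range (k + 1), (-1 : ℂ) ^ i * e ^ i * g i q) *
            (pdy F q + e * Q q))
          (fun q e => ∑ i ∈ Finset.Icc 1 k, (-1 : ℂ) ^ (i + 1) * (i : ℂ) * e ^ (i - 1) * r i q)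
          p ε) 0 = 0 := by
  intro p hp n hn
  have hFd : ∀ q ∈ U, DifferentiableAt ℂ F q := fun q hq => hF.differentiableAt (hU.mem_nhds hq)
  have hrd' : ∀ q ∈ U, ∀ i ∈ Finset.Icc 1 k, DifferentiableAt ℂ (r i) q := fun q hq i hi =>
    (hrd i (Finset.mem_Icc.1 hi).1 (Finset.mem_Icc.1 hi).2).differentiableAt (hU.mem_nhds hq)
  have hgk : ∀ {f}, DifferentiableOn ℂ f U → DifferentiableAt ℂ (g k * f) p := fun hf =>
    ((hgd k le_rfl).mul hf).differentiableAt (hU.mem_nhds hp)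
  have hS' := hasDerivAt_fderiv_francoisePotential_apply (hFd p hp) (hrd' p hp)
  exact iteratedDeriv_intCoeff_eq_zero_of_eq_exact_add hU hp (S := francoisePotential F r k)
    (u := g k * P) (v := g k * Q) (c := (-1) ^ k) (differentiableOn_francoisePotential hF hrd)
    (hgk hP) (hgk hQ)
    (fun q hq => francoise_mul_deformation_eq (hFd q hq) (hrd' q hq) (hg0 q)
      fun i h1 h2 => (hFr i h1 h2 q hq).1)
    (fun q hq => francoise_mul_deformation_eq (hFd q hq) (hrd' q hq) (hg0 q)
      fun i h1 h2 => (hFr i h1 h2 q hq).2)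
    (hS' · (1, 0)) (hS' · (0, 1)) (by fun_prop) hn
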